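/- arXiv:1305.5067 — 2 statements merged into one kernel-verified Lean document; each statement's English description precedes it below -/
import Mathlib

section
/- Let g₀ : ℝ → [0,∞) be a Lebesgue probability density and σ₀ > 0. Let f₀ : ℝ → ℝ be such that (i) ∫_ℝ f₀(x) g₀(x) dx is a finite constant; (ii) x ↦ x f₀(x)g₀(x) is differentiable on ℝ; (iii) there exists an integrable function h with |∂_y(y f₀(σy) g₀(σy))|_{y=x}| ≤ h(x) for all x ∈ ℝ and all σ in some bounded neighborhood of σ₀ in (0,∞). If X is a random variable with Lebesgue density x ↦ σ₀ g₀(σ₀ x), then E[𝒯_{σ₀;sca}(f₀,g₀)(X)] = 0, where 𝒯_{σ₀;sca}(f₀,g₀)(x) = ∂_y(y f₀(σ₀ y) g₀(σ₀ y))|_{y=x} / (σ₀ g₀(σ₀ x)), with the convention that the quotient is 0 where g₀(σ₀ x) = 0. -/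
/-!
Put `q x = f₀ (σ₀ x) g₀ (σ₀ x)` and `Q x = x q x`. The density in the law of `X` cancels the
denominator of the Stein operator, so the expectation is `∫ Q'` over `{x | g₀ (σ₀ x) ≠ 0}`.

* Nothing is lost on the complement: there `Q = 0`, and the zeros of `Q` at which `Q' ≠ 0` are
  isolated, hence form a countable (null) set (`ae_deriv_eq_zero_of_eq_zero`).
* `Q'` is integrable by the domination hypothesis at `σ = σ₀`, so `Q` has limits at `±∞`. Both
  limits vanish, since otherwise `|q x| = |Q x| / |x|` would be bounded below by a multiple of `1 / |x|`
  near infinity, contradicting integrability of `q`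
  (`eq_zero_of_tendsto_id_mul_atTop`). Hence `∫ Q' = 0` (`integral_deriv_id_mul_eq_zero`).
-/

open MeasureTheory Filter Set
open Topology

lemma ae_deriv_eq_zero_of_eq_zero {Q : ℝ → ℝ} (hQ : Differentiable ℝ Q) :
    ∀ᵐ x, Q x = 0 → deriv Q x = 0 := by
  have hdisc : IsDiscrete {x | Q x = 0 ∧ deriv Q x ≠ 0} := by
    rw [isDiscrete_iff_nhdsNE]
    rintro x ⟨-, hx⟩
    have hne : ∀ᶠ z in 𝓝[≠] x, Q z ≠ 0 := (hQ x).hasDerivAt.eventually_ne hx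
    rw [← disjoint_iff, disjoint_principal_right]
    filter_upwards [hne] with z hz hz'
    exact hz hz'.1
  have hnull := ((HereditarilyLindelofSpace.isLindelof _).countable_of_isDiscrete hdisc).ae_notMem
    volume
  filter_upwards [hnull] with x hx h0
  by_contra h
  exact hx ⟨h0, h⟩

lemma eq_zero_of_tendsto_id_mul_atTop {q : ℝ → ℝ} (hq : Integrable q) {L : ℝ}
    (hL : Tendsto (fun x => x * q x) atTop (𝓝 L)) : L = 0 := by
  by_contra hne
  have hpos : 0 < |L| / 2 := by positivity
  have hev : ∀ᶠ x in atTop, |L| / 2 < |x * q x| :=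
    hL.abs.eventually_const_lt (by linarith)
  obtain ⟨a, ha⟩ := eventually_atTop.1 (hev.and (eventually_gt_atTop 0))
  refine not_integrableOn_Ioi_inv (a := a) ?_
  refine Integrable.mono' ((hq.norm.const_mul (|L| / 2)⁻¹).integrableOn (s := Ioi a))
    measurable_inv.aestronglyMeasurable ?_
  filter_upwards [ae_restrict_mem measurableSet_Ioi] with x hx
  obtain ⟨h1, h2⟩ := ha x (le_of_lt hx)
  rw [abs_mul, abs_of_pos h2] at h1
  rw [norm_inv, Real.norm_eq_abs, Real.norm_eq_abs, abs_of_pos h2, inv_mul_eq_div,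
    le_div_iff₀ hpos, inv_mul_le_iff₀ h2]
  exact h1.le

lemma integral_deriv_id_mul_eq_zero {q : ℝ → ℝ} (hq : Integrable q)
    (hQ : Differentiable ℝ fun x => x * q x) (hQ' : Integrable (deriv fun x => x * q x)) :
    ∫ x, deriv (fun y => y * q y) x = 0 := by
  have hd : ∀ x, HasDerivAt (fun x => x * q x) (deriv (fun y => y * q y) x) x :=
    fun x => (hQ x).hasDerivAt
  have htop := tendsto_limUnder_of_hasDerivAt_of_integrableOn_Ioi (a := 0) (fun x _ => hd x)
    hQ'.integrableOn
  have hbot := tendsto_limUnder_of_hasDerivAt_of_integrableOn_Iic (a := 0) (fun x _ => hd x)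
    hQ'.integrableOn
  rw [integral_of_hasDerivAt_of_tendsto hd hQ' hbot htop,
    eq_zero_of_tendsto_id_mul_atTop hq htop, zero_sub, neg_eq_zero, ← neg_eq_zero]
  -- The limit at `-∞` is reduced to the one at `+∞` by reflecting `q`.
  refine eq_zero_of_tendsto_id_mul_atTop hq.comp_neg ?_
  simpa [Function.comp_def] using (hbot.comp tendsto_neg_atTop_atBot).neg

/-- **Scale-based Stein operator** (forward direction of Corollary 2.2 of Ley–Swan).
Let `g₀` be a Lebesgue probability density, `σ₀ > 0`, and let `f₀` satisfy (i) `f₀ g₀`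
is integrable, (ii) `x ↦ x f₀(x)g₀(x)` is differentiable on `ℝ`, (iii) the derivative
`∂_y (y f₀(σy) g₀(σy))|_{y=x}` is dominated, uniformly over a bounded neighborhood of `σ₀`
in `(0,∞)`, by an integrable function. If `X` has Lebesgue density `x ↦ σ₀ g₀(σ₀ x)` then
`E[𝒯_{σ₀;sca}(f₀,g₀)(X)] = 0` where
`𝒯_{σ₀;sca}(f₀,g₀)(x) = ∂_y(y f₀(σ₀y) g₀(σ₀y))|_{y=x} / (σ₀ g₀(σ₀ x))`
(zero where `g₀(σ₀ x) = 0`). -/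
theorem scale_stein_operator_mean_zero
    (g₀ : ℝ → ℝ) (hg₀_nonneg : ∀ x, 0 ≤ g₀ x)
    (hg₀_density : ∫ x, g₀ x = 1)
    (σ₀ : ℝ) (hσ₀ : 0 < σ₀) (f₀ : ℝ → ℝ)
    -- (i) ∫ f₀ g₀ is a finite constant
    (hi : Integrable (fun x => f₀ x * g₀ x))
    -- (ii) x ↦ x f₀(x) g₀(x) is differentiable on ℝ
    (hii : Differentiable ℝ (fun x => x * (f₀ x * g₀ x)))
    -- (iii) uniform domination on a bounded neighborhood of σ₀ in (0,∞)
    (hiii : ∃ U ∈ nhds σ₀, U ⊆ Set.Ioi (0 : ℝ) ∧ Bornology.IsBounded U ∧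
      ∃ h : ℝ → ℝ, Integrable h ∧
        ∀ x : ℝ, ∀ σ ∈ U, |deriv (fun y => y * (f₀ (σ * y) * g₀ (σ * y))) x| ≤ h x) :
    ∫ x, deriv (fun y => y * (f₀ (σ₀ * y) * g₀ (σ₀ * y))) x / (σ₀ * g₀ (σ₀ * x))
      ∂(volume.withDensity fun x => ENNReal.ofReal (σ₀ * g₀ (σ₀ * x))) = 0 := by
  obtain ⟨U, hU, -, -, h, hh, hdom⟩ := hiii
  have hq : Integrable (fun y => f₀ (σ₀ * y) * g₀ (σ₀ * y)) := hi.comp_mul_left' hσ₀.ne'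
  have hQ : Differentiable ℝ (fun y => y * (f₀ (σ₀ * y) * g₀ (σ₀ * y))) := by
    have hscale : (fun y => y * (f₀ (σ₀ * y) * g₀ (σ₀ * y)))
        = fun y => σ₀⁻¹ * (σ₀ * y * (f₀ (σ₀ * y) * g₀ (σ₀ * y))) := by
      ext y
      field_simp
    rw [hscale]
    exact (hii.comp (differentiable_id.const_mul σ₀)).const_mul σ₀⁻¹
  have hQ' : Integrable (deriv fun y => y * (f₀ (σ₀ * y) * g₀ (σ₀ * y))) :=
    hh.mono' (measurable_deriv _).aestronglyMeasurable
      (ae_of_all _ fun x => hdom x σ₀ (mem_of_mem_nhds hU))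
  -- A non-integrable `g₀` would have Bochner integral `0`.
  have hg : Integrable g₀ := by
    by_contra hg
    rw [integral_undef hg] at hg₀_density
    exact zero_ne_one hg₀_density
  have hgm : AEMeasurable (fun x => ENNReal.ofReal (σ₀ * g₀ (σ₀ * x))) :=
    ((hg.comp_mul_left' hσ₀.ne').const_mul σ₀).aestronglyMeasurable.aemeasurable.ennreal_ofReal
  rw [integral_withDensity_eq_integral_toReal_smul₀ hgm
    (ae_of_all _ fun _ => ENNReal.ofReal_lt_top), ← integral_deriv_id_mul_eq_zero hq hQ hQ']
  refine integral_congr_ae ?_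
  filter_upwards [ae_deriv_eq_zero_of_eq_zero hQ] with x hx
  rw [ENNReal.toReal_ofReal (mul_nonneg hσ₀.le (hg₀_nonneg _)), smul_eq_mul]
  by_cases h0 : g₀ (σ₀ * x) = 0
  · rw [hx (by simp [h0]), h0]
    simp
  · exact mul_div_cancel₀ _ (mul_ne_zero hσ₀.ne' h0)
end

section
/- Let X be a standard Gaussian random variable and let κ = E[X⁶/(1+X²)] (numerically κ = 3 − √(eπ/2)·Erfc(1/√2) ≈ 2.34432). Then for every continuously differentiable h : ℝ → ℝ with E[h(X)²] < ∞ and E[√(1+X²)|h'(X)|] < ∞: ( E[ √(1+X²) h'(X) ] )² ≤ κ · Var[h(X)], with equality if and only if h(x) is proportional (up to additive constant) to x³/√(1+x²). -/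
/-!
Write `φ` for the Gaussian density and `s x = x³ / √(1 + x²)` for (minus) the skewness score.
Since `(√(1 + x²) φ)' = - s φ`, integration by parts gives Stein's identity
`E[√(1 + X²) h'(X)] = E[h(X) s(X)]` (`integral_sqrt_mul_deriv_eq`); the case `h = 1` says
`E[s(X)] = 0`, so `h` may be replaced by `h - E[h(X)]` on the right. The bound is then the
Cauchy–Schwarz inequality in `L²(φ)`, as `κ = E[s(X)²]`, and its equality case is that of
Cauchy–Schwarz. Both are read off from the identity
`E[(κ w - B s)²] = κ (κ E[w²] - B²)`, where `w = h - E[h(X)]` and `B = E[w s]`.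
-/

open MeasureTheory Filter

/-- The standard Gaussian density `φ(x) = (2π)^{-1/2} e^{-x²/2}`. -/
noncomputable def gaussPdf (x : ℝ) : ℝ :=
  (Real.sqrt (2 * Real.pi))⁻¹ * Real.exp (-x ^ 2 / 2)

/-- The function `x³ / √(1 + x²)`, the negative of the skewness score of the Gaussian. -/
noncomputable def sasScore (x : ℝ) : ℝ := x ^ 3 / Real.sqrt (1 + x ^ 2)

lemma gaussPdf_pos (x : ℝ) : 0 < gaussPdf x := by
  unfold gaussPdf
  positivity

lemma continuous_gaussPdf : Continuous gaussPdf := by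
  unfold gaussPdf
  fun_prop

lemma continuous_sasScore : Continuous sasScore := by
  unfold sasScore
  refine Continuous.div (by fun_prop) (by fun_prop) fun x => ?_
  positivity

lemma sasScore_sq (x : ℝ) : sasScore x ^ 2 = x ^ 6 / (1 + x ^ 2) := by
  unfold sasScore
  rw [div_pow, Real.sq_sqrt (by positivity)]
  ring

lemma integrable_pow_mul_gaussPdf (n : ℕ) : Integrable (fun x : ℝ => x ^ n * gaussPdf x) := by
  have h := (integrable_rpow_mul_exp_neg_mul_sq (b := 1 / 2) (by norm_num) (s := n)
    (by have : (0 : ℝ) ≤ n := n.cast_nonneg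
        linarith)).const_mul (Real.sqrt (2 * Real.pi))⁻¹
  refine h.congr (Eventually.of_forall fun x => ?_)
  simp only [gaussPdf, Real.rpow_natCast]
  rw [show -(1 / 2 : ℝ) * x ^ 2 = -x ^ 2 / 2 by ring]
  ring

lemma integrable_gaussPdf : Integrable gaussPdf := by
  simpa using integrable_pow_mul_gaussPdf 0

lemma integral_gaussPdf : ∫ x, gaussPdf x = 1 := by
  have h := integral_gaussian (1 / 2)
  have e : ∀ x : ℝ, gaussPdf x = (Real.sqrt (2 * Real.pi))⁻¹ * Real.exp (-(1 / 2) * x ^ 2) := by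
    intro x
    rw [gaussPdf, show -(1 / 2 : ℝ) * x ^ 2 = -x ^ 2 / 2 by ring]
  simp_rw [e]
  rw [integral_const_mul, h, show Real.pi / (1 / 2) = 2 * Real.pi by ring]
  have : Real.sqrt (2 * Real.pi) ≠ 0 := by positivity
  exact inv_mul_cancel₀ this

lemma integrable_sasScore_sq : Integrable (fun x => sasScore x ^ 2 * gaussPdf x) := by
  refine (integrable_pow_mul_gaussPdf 4).mono'
    ((continuous_sasScore.pow 2).mul continuous_gaussPdf).aestronglyMeasurable
    (Eventually.of_forall fun x => ?_)
  have hp := gaussPdf_pos x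
  rw [Real.norm_of_nonneg (by positivity), sasScore_sq]
  gcongr
  rw [div_le_iff₀ (by positivity)]
  nlinarith [sq_nonneg (x ^ 2)]

lemma integrable_mul_mul_gaussPdf {f g : ℝ → ℝ} (hf : Continuous f) (hg : Continuous g)
    (hf2 : Integrable (fun x => f x ^ 2 * gaussPdf x))
    (hg2 : Integrable (fun x => g x ^ 2 * gaussPdf x)) :
    Integrable (fun x => f x * g x * gaussPdf x) := by
  refine (hf2.add hg2).mono' ((hf.mul hg).mul continuous_gaussPdf).aestronglyMeasurable
    (Eventually.of_forall fun x => ?_)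
  have hp := gaussPdf_pos x
  simp only [Pi.add_apply]
  rw [norm_mul, Real.norm_of_nonneg hp.le, ← add_mul, Real.norm_eq_abs]
  gcongr
  rw [abs_le]
  constructor <;> nlinarith [sq_nonneg (f x + g x), sq_nonneg (f x - g x), sq_nonneg (f x),
    sq_nonneg (g x)]

lemma hasDerivAt_sqrt_mul_gaussPdf (x : ℝ) :
    HasDerivAt (fun x => Real.sqrt (1 + x ^ 2) * gaussPdf x) (-(sasScore x * gaussPdf x)) x := by
  have hs : 0 < Real.sqrt (1 + x ^ 2) := by positivity
  have hsq : Real.sqrt (1 + x ^ 2) ^ 2 = 1 + x ^ 2 := Real.sq_sqrt (by positivity)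
  have h1 : HasDerivAt (fun x : ℝ => 1 + x ^ 2) (2 * x) x := by
    simpa using (hasDerivAt_pow 2 x).const_add 1
  have h2 : HasDerivAt (fun x : ℝ => -x ^ 2 / 2) (-x) x := by
    refine HasDerivAt.congr_deriv ((hasDerivAt_pow 2 x).neg.div_const 2) ?_
    norm_num
    ring
  have h3 : HasDerivAt gaussPdf (-x * gaussPdf x) x := by
    refine HasDerivAt.congr_deriv (h2.exp.const_mul (Real.sqrt (2 * Real.pi))⁻¹) ?_
    simp only [gaussPdf]
    ring
  refine HasDerivAt.congr_deriv ((h1.sqrt (by positivity)).mul h3) ?_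
  simp only [sasScore]
  field_simp
  rw [hsq]
  ring

/-- Stein's identity for the weight `√(1 + x²)`. -/
lemma integral_sqrt_mul_deriv_eq {h : ℝ → ℝ} (hh : ContDiff ℝ 1 h)
    (hh2 : Integrable (fun x => h x ^ 2 * gaussPdf x))
    (hh1 : Integrable (fun x => Real.sqrt (1 + x ^ 2) * deriv h x * gaussPdf x)) :
    ∫ x, Real.sqrt (1 + x ^ 2) * deriv h x * gaussPdf x =
      ∫ x, h x * sasScore x * gaussPdf x := by
  have hsq : Integrable (fun x => Real.sqrt (1 + x ^ 2) ^ 2 * gaussPdf x) := by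
    refine (integrable_gaussPdf.add (integrable_pow_mul_gaussPdf 2)).congr
      (Eventually.of_forall fun x => ?_)
    simp only [Pi.add_apply]
    rw [Real.sq_sqrt (by positivity)]
    ring
  have key := integral_mul_deriv_eq_deriv_mul_of_integrable (u := h) (u' := deriv h)
    (v := fun x => Real.sqrt (1 + x ^ 2) * gaussPdf x)
    (v' := fun x => -(sasScore x * gaussPdf x))
    (fun x _ => (hh.differentiable (by norm_num) x).hasDerivAt)
    (fun x _ => hasDerivAt_sqrt_mul_gaussPdf x)
    ((integrable_mul_mul_gaussPdf hh.continuous continuous_sasScore hh2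
      integrable_sasScore_sq).neg.congr (Eventually.of_forall fun x => by
        simp only [Pi.neg_apply, Pi.mul_apply]; ring))
    (hh1.congr (Eventually.of_forall fun x => by simp only [Pi.mul_apply]; ring))
    ((integrable_mul_mul_gaussPdf hh.continuous (by fun_prop) hh2 hsq).congr
      (Eventually.of_forall fun x => by simp only [Pi.mul_apply]; ring))
  simp only [mul_neg, integral_neg, neg_inj] at key
  calc _ = ∫ x, deriv h x * (Real.sqrt (1 + x ^ 2) * gaussPdf x) := by
        congr 1; ext x; ring
    _ = ∫ x, h x * (sasScore x * gaussPdf x) := key.symm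
    _ = _ := by congr 1; ext x; ring

lemma integral_sasScore : ∫ x, sasScore x * gaussPdf x = 0 := by
  have h := integral_sqrt_mul_deriv_eq (h := fun _ => 1) contDiff_const
    (by simpa using integrable_gaussPdf) (by simp)
  simpa using h.symm

/-- **SAS-skewness-based lower variance bound for the standard Gaussian** (Ley–Swan,
from Proposition 3.1 part 3 with `g₀ = φ`, `δ₀ = 0`). With
`κ = E[X⁶/(1+X²)]` (the skewness Fisher information, `≈ 2.34432`), for every `C¹`
function `h` with `E[h(X)²] < ∞` and `E[√(1+X²)|h'(X)|] < ∞`,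
`(E[√(1+X²) h'(X)])² ≤ κ Var[h(X)]`, with equality if and only if `h(x)` is
proportional (up to additive constant) to `x³/√(1+x²)`. -/
theorem gaussian_sas_lower_variance_bound
    (κ : ℝ) (hκ : κ = ∫ x, x ^ 6 / (1 + x ^ 2) * gaussPdf x)
    (h : ℝ → ℝ) (hh : ContDiff ℝ 1 h)
    (hh2 : Integrable (fun x => h x ^ 2 * gaussPdf x))
    (hh1 : Integrable (fun x => Real.sqrt (1 + x ^ 2) * deriv h x * gaussPdf x)) :
    (∫ x, Real.sqrt (1 + x ^ 2) * deriv h x * gaussPdf x) ^ 2 ≤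
      κ * ∫ x, (h x - ∫ y, h y * gaussPdf y) ^ 2 * gaussPdf x ∧
    ((∫ x, Real.sqrt (1 + x ^ 2) * deriv h x * gaussPdf x) ^ 2 =
        κ * ∫ x, (h x - ∫ y, h y * gaussPdf y) ^ 2 * gaussPdf x ↔
      ∃ c d : ℝ, ∀ᵐ x : ℝ, h x = c * (x ^ 3 / Real.sqrt (1 + x ^ 2)) + d) := by
  have hs2 : κ = ∫ x, sasScore x ^ 2 * gaussPdf x := by simp_rw [hκ, sasScore_sq]
  have hκ0 : 0 < κ := by
    rw [hs2]
    refine integral_pos_of_integrable_nonneg_nonzero (x := 1)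
      ((continuous_sasScore.pow 2).mul continuous_gaussPdf) integrable_sasScore_sq
      (fun x => mul_nonneg (sq_nonneg _) (gaussPdf_pos x).le) ?_
    refine mul_ne_zero ?_ (gaussPdf_pos 1).ne'
    rw [sasScore_sq]
    norm_num
  have hc := hh.continuous
  have hhφ : Integrable (fun x => h x * gaussPdf x) := by
    simpa using integrable_mul_mul_gaussPdf hc continuous_const hh2
      (g := fun _ => 1) (by simpa using integrable_gaussPdf)
  have hsφ : Integrable (fun x => sasScore x * gaussPdf x) := by
    simpa using integrable_mul_mul_gaussPdf continuous_sasScore continuous_const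
      integrable_sasScore_sq (g := fun _ => 1) (by simpa using integrable_gaussPdf)
  have hhs := integrable_mul_mul_gaussPdf hc continuous_sasScore hh2 integrable_sasScore_sq
  rw [integral_sqrt_mul_deriv_eq hh hh2 hh1]
  set m := ∫ y, h y * gaussPdf y with hm
  have hw2 : Integrable (fun x => (h x - m) ^ 2 * gaussPdf x) := by
    refine ((hh2.sub (hhφ.const_mul (2 * m))).add (integrable_gaussPdf.const_mul (m ^ 2))).congr
      (Eventually.of_forall fun x => ?_)
    simp only [Pi.add_apply, Pi.sub_apply]
    ring
  have hws := integrable_mul_mul_gaussPdf (f := fun x => h x - m) (by fun_prop)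
    continuous_sasScore hw2 integrable_sasScore_sq
  have hB : ∫ x, h x * sasScore x * gaussPdf x =
      ∫ x, (h x - m) * sasScore x * gaussPdf x := by
    have e : ∀ x, (h x - m) * sasScore x * gaussPdf x =
        h x * sasScore x * gaussPdf x - m * (sasScore x * gaussPdf x) := fun x => by ring
    simp_rw [e]
    rw [integral_sub hhs (hsφ.const_mul m), integral_const_mul, integral_sasScore]
    ring
  rw [hB]
  set B := ∫ x, (h x - m) * sasScore x * gaussPdf x with hBdef
  set A := ∫ x, (h x - m) ^ 2 * gaussPdf x with hA
  have hexp : ∀ x, (κ * (h x - m) - B * sasScore x) ^ 2 * gaussPdf x =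
      κ ^ 2 * ((h x - m) ^ 2 * gaussPdf x) - 2 * κ * B * ((h x - m) * sasScore x * gaussPdf x)
        + B ^ 2 * (sasScore x ^ 2 * gaussPdf x) := fun x => by ring
  have hQi : Integrable (fun x => (κ * (h x - m) - B * sasScore x) ^ 2 * gaussPdf x) := by
    simp_rw [hexp]
    exact ((hw2.const_mul _).sub (hws.const_mul _)).add (integrable_sasScore_sq.const_mul _)
  have hQ : ∫ x, (κ * (h x - m) - B * sasScore x) ^ 2 * gaussPdf x = κ * (κ * A - B ^ 2) := by
    simp_rw [hexp]
    have hd : Integrable (fun x => κ ^ 2 * ((h x - m) ^ 2 * gaussPdf x)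
        - 2 * κ * B * ((h x - m) * sasScore x * gaussPdf x)) :=
      (hw2.const_mul _).sub (hws.const_mul _)
    rw [integral_add hd (integrable_sasScore_sq.const_mul _), integral_sub (hw2.const_mul _) (hws.const_mul _),
      integral_const_mul, integral_const_mul, integral_const_mul, ← hs2, ← hA, ← hBdef]
    ring
  have hnn : ∀ x, 0 ≤ (κ * (h x - m) - B * sasScore x) ^ 2 * gaussPdf x :=
    fun x => mul_nonneg (sq_nonneg _) (gaussPdf_pos x).le
  refine ⟨?_, ?_, ?_⟩
  · have h0 : 0 ≤ ∫ x, (κ * (h x - m) - B * sasScore x) ^ 2 * gaussPdf x := integral_nonneg hnn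
    rw [hQ] at h0
    linarith [nonneg_of_mul_nonneg_right h0 hκ0]
  · intro heq
    have hz : ∫ x, (κ * (h x - m) - B * sasScore x) ^ 2 * gaussPdf x = 0 := by
      rw [hQ, heq]
      ring
    rw [integral_eq_zero_iff_of_nonneg hnn hQi] at hz
    refine ⟨B / κ, m, ?_⟩
    filter_upwards [hz] with x hx
    have hx' : κ * (h x - m) - B * sasScore x = 0 := by
      simpa [(gaussPdf_pos x).ne'] using hx
    change h x = B / κ * sasScore x + m
    field_simp
    linarith
  · rintro ⟨c, d, hcd⟩
    replace hcd : ∀ᵐ x, h x = c * sasScore x + d := hcd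
    have hmd : m = d := by
      have : m = ∫ x, (c * (sasScore x * gaussPdf x) + d * gaussPdf x) := by
        refine integral_congr_ae ?_
        filter_upwards [hcd] with x hx
        rw [hx]
        ring
      rw [this, integral_add (hsφ.const_mul c) (integrable_gaussPdf.const_mul d),
        integral_const_mul, integral_const_mul, integral_sasScore, integral_gaussPdf]
      ring
    have hBc : B = c * κ := by
      rw [hs2, ← integral_const_mul]
      refine integral_congr_ae ?_
      filter_upwards [hcd] with x hx
      rw [hx, hmd]
      ring
    have hAc : A = c ^ 2 * κ := by
      rw [hs2, ← integral_const_mul]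
      refine integral_congr_ae ?_
      filter_upwards [hcd] with x hx
      rw [hx, hmd]
      ring
    rw [hBc, hAc]
    ring
end
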